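/- The map assigning to μ∈ba₀(λ) the functional f ↦ ∫f dμ is a linear isomorphism from ba₀(λ) onto the space of continuous (with respect to the metric d) linear functionals on L⁰(λ): every f∈L⁰(λ) is μ-integrable for every μ∈ba₀(λ), the functional f↦∫f dμ is continuous and linear on L⁰(λ), and every continuous linear functional φ on L⁰(λ) satisfies φ(f)=∫f dμ for a unique μ∈ba₀(λ). -/

import Mathlib

open Set Filter Topology

namespace FA

/-- An algebra of subsets of `Ω`. -/
structure SetAlg (Ω : Type*) where
  sets : Set (Set Ω)
  empty_mem : ∅ ∈ sets
  compl_mem : ∀ ⦃A⦄, A ∈ sets → Aᶜ ∈ sets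
  union_mem : ∀ ⦃A B⦄, A ∈ sets → B ∈ sets → A ∪ B ∈ sets

/-- A bounded, finitely additive real-valued set function on the algebra `𝒜`,
i.e. an element of `ba(𝒜)`. -/
structure BAMeasure {Ω : Type*} (𝒜 : SetAlg Ω) where
  toFun : Set Ω → ℝ
  map_empty : toFun ∅ = 0
  additive : ∀ ⦃A B : Set Ω⦄, A ∈ 𝒜.sets → B ∈ 𝒜.sets → Disjoint A B →
      toFun (A ∪ B) = toFun A + toFun B
  bounded : ∃ M : ℝ, ∀ A ∈ 𝒜.sets, |toFun A| ≤ M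

variable {Ω : Type*} {𝒜 : SetAlg Ω}

/-- Total variation `|λ|(A) = λ⁺(A) + λ⁻(A)`. -/
noncomputable def var (lam : BAMeasure 𝒜) (A : Set Ω) : ℝ :=
  sSup {x | ∃ B ∈ 𝒜.sets, B ⊆ A ∧ x = lam.toFun B} +
  sSup {x | ∃ B ∈ 𝒜.sets, B ⊆ A ∧ x = -lam.toFun B}

/-- The outer measure `|λ|*(B) = inf {|λ|(A) : A ∈ 𝒜, B ⊆ A}`. -/
noncomputable def outer (lam : BAMeasure 𝒜) (B : Set Ω) : ℝ :=
  sInf {x | ∃ A ∈ 𝒜.sets, B ⊆ A ∧ x = var lam A}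

/-- `𝒜`-simple functions. -/
def IsSimple (𝒜 : SetAlg Ω) (f : Ω → ℝ) : Prop :=
  (Set.range f).Finite ∧ ∀ r : ℝ, f ⁻¹' {r} ∈ 𝒜.sets

/-- `λ`-convergence: `(f n)` converges to `g` in `λ`-measure. -/
def LConv (lam : BAMeasure 𝒜) (f : ℕ → Ω → ℝ) (g : Ω → ℝ) : Prop :=
  ∀ c > (0:ℝ), Tendsto (fun n => outer lam {ω | c < |f n ω - g ω|}) atTop (𝓝 0)

/-- `λ`-Cauchy sequences. -/
def LCauchy (lam : BAMeasure 𝒜) (f : ℕ → Ω → ℝ) : Prop :=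
  ∀ c > (0:ℝ), ∀ ε > (0:ℝ), ∃ N : ℕ, ∀ p q : ℕ,
    outer lam {ω | c < |f (N + p) ω - f (N + q) ω|} < ε

/-- `L⁰(λ)`: `λ`-limits of sequences of `𝒜`-simple functions. -/
def L0 (lam : BAMeasure 𝒜) : Set (Ω → ℝ) :=
  {f | ∃ s : ℕ → Ω → ℝ, (∀ n, IsSimple 𝒜 (s n)) ∧ LConv lam s f}

/-- The metric of `L⁰(λ)`: `d(f,g) = inf {c + |λ|*(|f-g| ≥ c) : c > 0}`. -/
noncomputable def dL0 (lam : BAMeasure 𝒜) (f g : Ω → ℝ) : ℝ :=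
  sInf {x | ∃ c > (0:ℝ), x = c + outer lam {ω | c ≤ |f ω - g ω|}}

/-- A set `K` is bounded in `L⁰(λ)` if `lim_{c→∞} sup_{f∈K} |λ|*(|f|>c) = 0`. -/
def BddL0 (lam : BAMeasure 𝒜) (K : Set (Ω → ℝ)) : Prop :=
  ∀ ε > (0:ℝ), ∃ c₀ : ℝ, ∀ c ≥ c₀, ∀ f ∈ K, outer lam {ω | c < |f ω|} < ε

/-- The nonnegative elements of `L⁰(λ)`. -/
def L0pos (lam : BAMeasure 𝒜) : Set (Ω → ℝ) := {f ∈ L0 lam | ∀ ω, 0 ≤ f ω}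

/-- The elementary integral of a simple function with respect to a set function. -/
noncomputable def simpleIntegral (m : Set Ω → ℝ) (f : Ω → ℝ) : ℝ :=
  ∑ᶠ r : ℝ, r * m (f ⁻¹' {r})

/-- Dunford–Schwartz integrability: there is a sequence of simple functions converging to `f`
in `λ`-measure which is Cauchy in mean. -/
def MemL1 (lam : BAMeasure 𝒜) (f : Ω → ℝ) : Prop :=
  ∃ s : ℕ → Ω → ℝ, (∀ n, IsSimple 𝒜 (s n)) ∧ LConv lam s f ∧
    ∀ ε > (0:ℝ), ∃ N : ℕ, ∀ m ≥ N, ∀ n ≥ N,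
      simpleIntegral (var lam) (fun ω => |s m ω - s n ω|) < ε

/-- `L¹(λ)`. -/
def L1 (lam : BAMeasure 𝒜) : Set (Ω → ℝ) := {f | MemL1 lam f}

open scoped Classical in
/-- The Dunford–Schwartz integral `∫ f dλ`. -/
noncomputable def integral (lam : BAMeasure 𝒜) (f : Ω → ℝ) : ℝ :=
  if h : MemL1 lam f then
    limUnder atTop (fun n => simpleIntegral lam.toFun (h.choose n))
  else 0

open scoped Classical in
/-- The `L¹(λ)` seminorm `∫ |f| d|λ|`. -/
noncomputable def l1Norm (lam : BAMeasure 𝒜) (f : Ω → ℝ) : ℝ :=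
  if h : MemL1 lam f then
    limUnder atTop (fun n => simpleIntegral (var lam) (fun ω => |h.choose n ω|))
  else 0

/-- A set is bounded in `L¹(μ)` if the integrals `∫|f| d|μ|` are uniformly bounded. -/
def BddL1 (mu : BAMeasure 𝒜) (K : Set (Ω → ℝ)) : Prop :=
  ∃ M : ℝ, ∀ f ∈ K, l1Norm mu f ≤ M

/-- Finitely additive probability measures. -/
def IsFAProb (mu : BAMeasure 𝒜) : Prop :=
  mu.toFun Set.univ = 1 ∧ ∀ A ∈ 𝒜.sets, 0 ≤ mu.toFun A

/-- `μ ∈ 𝔓_*(λ)`: a finitely additive probability with `|μ| ≤ c |λ|` and the same null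
sets as `λ`. -/
def PStar (lam mu : BAMeasure 𝒜) : Prop :=
  IsFAProb mu ∧ (∃ c : ℝ, 0 ≤ c ∧ ∀ A ∈ 𝒜.sets, var mu A ≤ c * var lam A) ∧
  ∀ A ∈ 𝒜.sets, (mu.toFun A = 0 ↔ var lam A = 0)

/-- `μ ∈ 𝔓_*(λ; K)`. -/
def PStarWith (lam : BAMeasure 𝒜) (K : Set (Ω → ℝ)) (mu : BAMeasure 𝒜) : Prop :=
  PStar lam mu ∧ K ⊆ L1 mu ∧ BddL1 mu K

/-- `f` is a `λ`-a.s. lower bound of `K`. -/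
def ASLowerBound (lam : BAMeasure 𝒜) (f : Ω → ℝ) (K : Set (Ω → ℝ)) : Prop :=
  ∀ c > (0:ℝ), ∀ k ∈ K, outer lam {ω | k ω < f ω - c} = 0

/-- Absolute continuity `μ ≪ λ` for bounded finitely additive set functions. -/
def AbsCont (mu lam : BAMeasure 𝒜) : Prop :=
  ∀ ε > (0:ℝ), ∃ δ > (0:ℝ), ∀ A ∈ 𝒜.sets, var lam A < δ → var mu A < ε

/-- `λ ∈ ba₀(𝒜)`: the range of `λ` is finite. -/
def FiniteRange (lam : BAMeasure 𝒜) : Prop := (lam.toFun '' 𝒜.sets).Finite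

/-- `μ ∈ ba₀(λ)`. -/
def BA0rel (lam mu : BAMeasure 𝒜) : Prop := FiniteRange mu ∧ AbsCont mu lam

/-- Strong continuity: arbitrarily fine finite partitions. -/
def StronglyContinuous (lam : BAMeasure 𝒜) : Prop :=
  ∀ ε > (0:ℝ), ∃ (N : ℕ) (A : Fin N → Set Ω), (∀ n, A n ∈ 𝒜.sets) ∧
    Pairwise (Function.onFun Disjoint A) ∧ (⋃ n, A n) = Set.univ ∧
    ∀ n, var lam (A n) < ε

/-- Orthogonality of bounded finitely additive set functions. -/
def Orthogonal (mu nu : BAMeasure 𝒜) : Prop :=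
  ∀ ε > (0:ℝ), ∃ A ∈ 𝒜.sets, var mu A < ε ∧ var nu Aᶜ < ε

/-- Strong discontinuity: orthogonal to every strongly continuous element of `ba(𝒜)`. -/
def StronglyDiscontinuous (mu : BAMeasure 𝒜) : Prop :=
  ∀ nu : BAMeasure 𝒜, StronglyContinuous nu → Orthogonal mu nu

/-- Countable additivity of `λ` on the algebra `𝒜`. -/
def CountablyAdditive (lam : BAMeasure 𝒜) : Prop :=
  ∀ A : ℕ → Set Ω, (∀ n, A n ∈ 𝒜.sets) → Pairwise (Function.onFun Disjoint A) →
    (⋃ n, A n) ∈ 𝒜.sets → HasSum (fun n => lam.toFun (A n)) (lam.toFun (⋃ n, A n))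

/-- `𝒜` is a σ-algebra. -/
def IsSigmaAlg (𝒜 : SetAlg Ω) : Prop :=
  ∀ A : ℕ → Set Ω, (∀ n, A n ∈ 𝒜.sets) → (⋃ n, A n) ∈ 𝒜.sets

/-- Linearity of a functional on `L⁰(λ)`. -/
def LinearOnL0 (lam : BAMeasure 𝒜) (φ : (Ω → ℝ) → ℝ) : Prop :=
  (∀ f ∈ L0 lam, ∀ g ∈ L0 lam, φ (f + g) = φ f + φ g) ∧
  (∀ a : ℝ, ∀ f ∈ L0 lam, φ (a • f) = a * φ f)

/-- Continuity of a functional on `L⁰(λ)` with respect to the metric `d`. -/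
def ContinuousOnL0 (lam : BAMeasure 𝒜) (φ : (Ω → ℝ) → ℝ) : Prop :=
  ∀ f ∈ L0 lam, ∀ ε > (0:ℝ), ∃ δ > (0:ℝ), ∀ g ∈ L0 lam, dL0 lam g f < δ → |φ g - φ f| < ε

/-!
A set function `μ` of finite range has a gap: `|μ|` takes no value in some interval `(0, δ)`.
Hence convergence in `μ`-measure is convergence in the `μ`-essential supremum, and along such
sequences the integrals of simple functions converge; this makes `∫ · dμ` defined, linear and
continuous on all of `L⁰(μ)`, which contains `L⁰(λ)` when `μ ≪ λ`.

Conversely, let `φ` be linear and continuous on `L⁰(λ)`. Every multiple of `1_A` is within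
`|λ|(A)` of the origin, so `φ(1_A) = 0` as soon as `|λ|(A)` is below some `δ > 0`. A set which is
not an atom of `A ↦ φ(1_A)` therefore splits into two pieces of `|λ|`-measure at least `δ`, which
can happen only finitely often, so this set function belongs to `ba₀(λ)`. It represents `φ` on
simple functions, and by density on `L⁰(λ)`.
-/

section

open MeasureTheory (AddContent IsSetAlgebra IsSetRing addContent_biUnion_eq addContent_empty
  addContent_union)

/-! ### Finitely additive set functions -/

theorem addContent_inter_add_sdiff {C : Set (Set Ω)} {G : Type*} [AddCommMonoid G]
    (hC : IsSetRing C) (m : AddContent G C) {A B : Set Ω} (hA : A ∈ C) (hB : B ∈ C) :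
    m (A ∩ B) + m (A \ B) = m A := by
  rw [← addContent_union hC (hC.inter_mem hA hB) (hC.sdiff_mem hA hB)
    disjoint_inf_sdiff, inter_union_sdiff]

theorem finite_image_of_inter_sdiff {C : Set (Set Ω)} {G : Type*} [AddCommMonoid G]
    (hC : IsSetRing C) (m : AddContent G C) {A B : Set Ω} (hB : B ∈ C)
    (hfinB : (m '' (C ∩ 𝒫 B)).Finite) (hfinAB : (m '' (C ∩ 𝒫 (A \ B))).Finite) :
    (m '' (C ∩ 𝒫 A)).Finite := by
  refine (hfinB.image2 (· + ·) hfinAB).subset ?_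
  rintro _ ⟨D, ⟨hD, hDA⟩, rfl⟩
  exact ⟨m (D ∩ B), ⟨_, ⟨hC.inter_mem hD hB, inter_subset_right⟩, rfl⟩,
    m (D \ B), ⟨_, ⟨hC.sdiff_mem hD hB, sdiff_subset_sdiff_left hDA⟩, rfl⟩,
    addContent_inter_add_sdiff hC m hD hB⟩

theorem finite_image_of_atom {C : Set (Set Ω)} {G : Type*} [AddCommMonoid G]
    (hC : IsSetRing C) (m : AddContent G C) {A : Set Ω} (hA : A ∈ C)
    (hatom : ∀ B ∈ C, B ⊆ A → m B ≠ 0 → m (A \ B) = 0) :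
    (m '' (C ∩ 𝒫 A)).Finite := by
  refine (toFinite {0, m A}).subset ?_
  rintro _ ⟨B, ⟨hB, hBA⟩, rfl⟩
  by_cases hmB : m B = 0
  · exact Or.inl hmB
  · have hsplit := addContent_inter_add_sdiff hC m hA hB
    rw [inter_eq_right.2 hBA, hatom B hB hBA hmB, add_zero] at hsplit
    exact Or.inr hsplit

/- Either `A` is an atom of `m`, or it splits into two pieces of `v`-measure at least `δ`; the
second case can be repeated at most `v A / δ` times. -/
theorem finite_image_of_eq_zero_of_lt {C : Set (Set Ω)} {G : Type*} [AddCommMonoid G]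
    (hC : IsSetRing C) (v : AddContent ℝ C) (hv : ∀ A ∈ C, 0 ≤ v A) (m : AddContent G C)
    {δ : ℝ} (hδ : 0 < δ) (hm : ∀ A ∈ C, v A < δ → m A = 0) {A : Set Ω} (hA : A ∈ C) :
    (m '' (C ∩ 𝒫 A)).Finite := by
  obtain ⟨n, hn⟩ := exists_nat_gt (v A / δ)
  rw [div_lt_iff₀ hδ] at hn
  induction n generalizing A with
  | zero => exact absurd (hv A hA) (by simpa using hn)
  | succ n ih =>
    by_cases hatom : ∀ B ∈ C, B ⊆ A → m B ≠ 0 → m (A \ B) = 0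
    · exact finite_image_of_atom hC m hA hatom
    · push Not at hatom
      obtain ⟨B, hB, hBA, hmB, hmAB⟩ := hatom
      have hAB := hC.sdiff_mem hA hB
      have hvB : δ ≤ v B := not_lt.1 fun hlt => hmB (hm B hB hlt)
      have hvAB : δ ≤ v (A \ B) := not_lt.1 fun hlt => hmAB (hm _ hAB hlt)
      have hsplit := addContent_inter_add_sdiff hC v hA hB
      rw [inter_eq_right.2 hBA] at hsplit
      push_cast at hn
      exact finite_image_of_inter_sdiff hC m hB (ih hB (by linarith)) (ih hAB (by linarith))

theorem SetAlg.isSetAlgebra (𝒜 : SetAlg Ω) : IsSetAlgebra 𝒜.sets where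
  empty_mem := 𝒜.empty_mem
  compl_mem := 𝒜.compl_mem
  union_mem := 𝒜.union_mem

theorem SetAlg.isSetRing (𝒜 : SetAlg Ω) : IsSetRing 𝒜.sets := 𝒜.isSetAlgebra.isSetRing

/-- A bounded finitely additive set function as a Mathlib additive content. -/
def BAMeasure.content (mu : BAMeasure 𝒜) : AddContent ℝ 𝒜.sets :=
  𝒜.isSetRing.addContent_of_union mu.toFun mu.map_empty fun hA hB => mu.additive hA hB

/-- The element of `ba₀(𝒜)` given by an additive content with finite range. -/
def BAMeasure.ofFinite (m : AddContent ℝ 𝒜.sets) (hm : (m '' 𝒜.sets).Finite) :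
    BAMeasure 𝒜 where
  toFun := m
  map_empty := m.empty'
  additive _ _ hA hB hAB := addContent_union 𝒜.isSetRing hA hB hAB
  bounded := by
    obtain ⟨M, hM⟩ := (hm.image (|·|)).bddAbove
    exact ⟨M, fun A hA => hM ⟨_, ⟨A, hA, rfl⟩, rfl⟩⟩

instance : Neg (BAMeasure 𝒜) where
  neg mu :=
    { toFun := fun A => -mu.toFun A
      map_empty := by rw [mu.map_empty, neg_zero]
      additive := fun A B hA hB hAB => by rw [mu.additive hA hB hAB, neg_add]
      bounded := by simpa only [abs_neg] using mu.bounded }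

/-! ### The total variation -/

/-- The positive part `μ⁺(A) = sup {μ(B) : B ∈ 𝒜, B ⊆ A}`; the negative part is `posPart (-μ)`. -/
noncomputable def posPart (mu : BAMeasure 𝒜) (A : Set Ω) : ℝ :=
  sSup {x | ∃ B ∈ 𝒜.sets, B ⊆ A ∧ x = mu.toFun B}

theorem le_posPart (mu : BAMeasure 𝒜) {A B : Set Ω} (hB : B ∈ 𝒜.sets) (hBA : B ⊆ A) :
    mu.toFun B ≤ posPart mu A := by
  obtain ⟨M, hM⟩ := mu.bounded
  refine le_csSup ⟨M, ?_⟩ ⟨B, hB, hBA, rfl⟩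
  rintro _ ⟨D, hD, -, rfl⟩
  exact (le_abs_self _).trans (hM D hD)

theorem posPart_le {mu : BAMeasure 𝒜} {A : Set Ω} {x : ℝ}
    (h : ∀ B ∈ 𝒜.sets, B ⊆ A → mu.toFun B ≤ x) : posPart mu A ≤ x := by
  refine csSup_le ⟨_, ∅, 𝒜.empty_mem, empty_subset _, rfl⟩ ?_
  rintro _ ⟨B, hB, hBA, rfl⟩
  exact h B hB hBA

theorem posPart_nonneg (mu : BAMeasure 𝒜) (A : Set Ω) : 0 ≤ posPart mu A :=
  mu.map_empty.ge.trans (le_posPart mu 𝒜.empty_mem (empty_subset _))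

theorem posPart_empty (mu : BAMeasure 𝒜) : posPart mu ∅ = 0 :=
  (posPart_le fun B _ hB => by rw [subset_empty_iff.1 hB, mu.map_empty]).antisymm
    (posPart_nonneg mu ∅)

theorem posPart_union (mu : BAMeasure 𝒜) {A B : Set Ω} (hA : A ∈ 𝒜.sets) (hB : B ∈ 𝒜.sets)
    (hAB : Disjoint A B) : posPart mu (A ∪ B) = posPart mu A + posPart mu B := by
  apply le_antisymm
  · refine posPart_le fun D hD hDAB => ?_
    have hDA := 𝒜.isSetRing.inter_mem hD hA
    have hDB := 𝒜.isSetRing.inter_mem hD hB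
    calc mu.toFun D = mu.toFun (D ∩ A ∪ D ∩ B) := by
          rw [← inter_union_distrib_left, inter_eq_left.2 hDAB]
      _ = mu.toFun (D ∩ A) + mu.toFun (D ∩ B) :=
          mu.additive hDA hDB (hAB.mono inter_subset_right inter_subset_right)
      _ ≤ posPart mu A + posPart mu B :=
          add_le_add (le_posPart mu hDA inter_subset_right) (le_posPart mu hDB inter_subset_right)
  · rw [← le_sub_iff_add_le]
    refine posPart_le fun D hD hDA => ?_
    rw [le_sub_comm]
    refine posPart_le fun E hE hEB => ?_
    rw [le_sub_iff_add_le', ← mu.additive hD hE (hAB.mono hDA hEB)]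
    exact le_posPart mu (𝒜.union_mem hD hE) (union_subset_union hDA hEB)

theorem var_eq_posPart_add (mu : BAMeasure 𝒜) (A : Set Ω) :
    var mu A = posPart mu A + posPart (-mu) A := rfl

theorem var_nonneg (mu : BAMeasure 𝒜) (A : Set Ω) : 0 ≤ var mu A :=
  add_nonneg (posPart_nonneg mu A) (posPart_nonneg (-mu) A)

theorem var_empty (mu : BAMeasure 𝒜) : var mu ∅ = 0 := by
  rw [var_eq_posPart_add, posPart_empty, posPart_empty, add_zero]

theorem var_union (mu : BAMeasure 𝒜) {A B : Set Ω} (hA : A ∈ 𝒜.sets) (hB : B ∈ 𝒜.sets)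
    (hAB : Disjoint A B) : var mu (A ∪ B) = var mu A + var mu B := by
  simp only [var_eq_posPart_add, posPart_union _ hA hB hAB]
  ring

/-- The total variation `|μ|` as an additive content. -/
noncomputable def varContent (mu : BAMeasure 𝒜) : AddContent ℝ 𝒜.sets :=
  𝒜.isSetRing.addContent_of_union (var mu) (var_empty mu) fun hA hB => var_union mu hA hB

theorem var_mono (mu : BAMeasure 𝒜) {A B : Set Ω} (hA : A ∈ 𝒜.sets) (hB : B ∈ 𝒜.sets)
    (hAB : A ⊆ B) : var mu A ≤ var mu B := by
  have hsplit : var mu (B ∩ A) + var mu (B \ A) = var mu B :=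
    addContent_inter_add_sdiff 𝒜.isSetRing (varContent mu) hB hA
  rw [inter_eq_right.2 hAB] at hsplit
  linarith [var_nonneg mu (B \ A)]

theorem var_union_le (mu : BAMeasure 𝒜) {A B : Set Ω} (hA : A ∈ 𝒜.sets) (hB : B ∈ 𝒜.sets) :
    var mu (A ∪ B) ≤ var mu A + var mu B := by
  have hBA := 𝒜.isSetRing.sdiff_mem hB hA
  rw [← union_sdiff_self, var_union mu hA hBA disjoint_sdiff_right]
  gcongr
  exact var_mono mu hBA hB sdiff_subset

theorem abs_le_var (mu : BAMeasure 𝒜) {A : Set Ω} (hA : A ∈ 𝒜.sets) :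
    |mu.toFun A| ≤ var mu A :=
  abs_le'.2
    ⟨(le_posPart mu hA subset_rfl).trans (le_add_of_nonneg_right (posPart_nonneg (-mu) A)),
      (le_posPart (-mu) hA subset_rfl).trans (le_add_of_nonneg_left (posPart_nonneg mu A))⟩

theorem var_eq_zero_of_forall_subset {mu : BAMeasure 𝒜} {A : Set Ω}
    (h : ∀ B ∈ 𝒜.sets, B ⊆ A → mu.toFun B = 0) : var mu A = 0 := by
  have hpos : posPart mu A ≤ 0 := posPart_le fun B hB hBA => (h B hB hBA).le
  have hneg : posPart (-mu) A ≤ 0 :=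
    posPart_le fun B hB hBA => (neg_eq_zero.2 (h B hB hBA)).le
  exact (add_nonpos hpos hneg).antisymm (var_nonneg mu A)

/-! ### The outer measure and null sets -/

theorem outer_nonneg (mu : BAMeasure 𝒜) (B : Set Ω) : 0 ≤ outer mu B := by
  refine Real.sInf_nonneg ?_
  rintro _ ⟨A, -, -, rfl⟩
  exact var_nonneg mu A

theorem outer_le_var (mu : BAMeasure 𝒜) {A B : Set Ω} (hA : A ∈ 𝒜.sets) (hBA : B ⊆ A) :
    outer mu B ≤ var mu A := by
  refine csInf_le ⟨0, ?_⟩ ⟨A, hA, hBA, rfl⟩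
  rintro _ ⟨D, -, -, rfl⟩
  exact var_nonneg mu D

theorem exists_var_lt_of_outer_lt {mu : BAMeasure 𝒜} {B : Set Ω} {x : ℝ} (h : outer mu B < x) :
    ∃ A ∈ 𝒜.sets, B ⊆ A ∧ var mu A < x := by
  obtain ⟨_, ⟨A, hA, hBA, rfl⟩, hlt⟩ :=
    exists_lt_of_csInf_lt (by exact ⟨_, univ, 𝒜.isSetAlgebra.univ_mem, subset_univ _, rfl⟩) h
  exact ⟨A, hA, hBA, hlt⟩

theorem outer_eq_var (mu : BAMeasure 𝒜) {A : Set Ω} (hA : A ∈ 𝒜.sets) :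
    outer mu A = var mu A := by
  refine (outer_le_var mu hA subset_rfl).antisymm (le_of_forall_gt fun x hx => ?_)
  obtain ⟨D, hD, hAD, hlt⟩ := exists_var_lt_of_outer_lt hx
  exact (var_mono mu hA hD hAD).trans_lt hlt

theorem outer_empty (mu : BAMeasure 𝒜) : outer mu ∅ = 0 :=
  (outer_eq_var mu 𝒜.empty_mem).trans (var_empty mu)

theorem outer_mono (mu : BAMeasure 𝒜) {B D : Set Ω} (hBD : B ⊆ D) : outer mu B ≤ outer mu D := by
  refine le_of_forall_gt fun x hx => ?_
  obtain ⟨A, hA, hDA, hlt⟩ := exists_var_lt_of_outer_lt hx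
  exact (outer_le_var mu hA (hBD.trans hDA)).trans_lt hlt

theorem outer_union_le (mu : BAMeasure 𝒜) (B D : Set Ω) :
    outer mu (B ∪ D) ≤ outer mu B + outer mu D := by
  refine le_of_forall_pos_le_add fun ε hε => ?_
  obtain ⟨A, hA, hBA, hltA⟩ :=
    exists_var_lt_of_outer_lt (lt_add_of_pos_right (outer mu B) (half_pos hε))
  obtain ⟨E, hE, hDE, hltE⟩ :=
    exists_var_lt_of_outer_lt (lt_add_of_pos_right (outer mu D) (half_pos hε))
  linarith [outer_le_var mu (𝒜.union_mem hA hE) (union_subset_union hBA hDE),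
    var_union_le mu hA hE]

/-- The filter of sets whose complement has `|μ|`-outer measure zero, so that
`∀ᶠ ω in ae μ, p ω` says that `p` holds `μ`-almost everywhere. -/
def ae (mu : BAMeasure 𝒜) : Filter Ω :=
  Filter.comk (fun B => outer mu B = 0) (outer_empty mu)
    (fun _ hD _ hBD => ((outer_mono mu hBD).trans_eq hD).antisymm (outer_nonneg mu _))
    (fun B hB D hD => ((outer_union_le mu B D).trans_eq (by rw [hB, hD, add_zero])).antisymm
      (outer_nonneg mu _))

theorem eventually_ae_iff {mu : BAMeasure 𝒜} {p : Ω → Prop} :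
    (∀ᶠ ω in ae mu, p ω) ↔ outer mu {ω | ¬p ω} = 0 :=
  Iff.rfl

theorem eventually_ae_abs_le_iff {mu : BAMeasure 𝒜} {f : Ω → ℝ} {c : ℝ} :
    (∀ᶠ ω in ae mu, |f ω| ≤ c) ↔ outer mu {ω | c < |f ω|} = 0 := by
  simp only [eventually_ae_iff, not_le]

/-! ### Simple functions and their integrals -/

/-- Maps with finitely many values, all of whose fibres lie in `𝒜`: simple functions with values in
an arbitrary type. For real-valued maps this is definitionally `IsSimple`. -/
def IsSimpleMap {α : Type*} (𝒜 : SetAlg Ω) (h : Ω → α) : Prop :=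
  (range h).Finite ∧ ∀ a, h ⁻¹' {a} ∈ 𝒜.sets

section Simple

variable {α β : Type*} {h : Ω → α} {s t : Ω → ℝ}

theorem IsSimpleMap.prodMk {k : Ω → β} (hh : IsSimpleMap 𝒜 h) (hk : IsSimpleMap 𝒜 k) :
    IsSimpleMap 𝒜 (fun ω => (h ω, k ω)) := by
  refine ⟨(hh.1.prod hk.1).subset (range_subset_iff.2 fun ω => ⟨⟨ω, rfl⟩, ⟨ω, rfl⟩⟩), ?_⟩
  rintro ⟨a, b⟩
  rw [← singleton_prod_singleton, mk_preimage_prod]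
  exact 𝒜.isSetRing.inter_mem (hh.2 a) (hk.2 b)

open scoped Classical in
theorem preimage_comp_singleton_eq_biUnion (hh : (range h).Finite) (F : α → β) (b : β) :
    (fun ω => F (h ω)) ⁻¹' {b} = ⋃ a ∈ hh.toFinset.filter (F · = b), h ⁻¹' {a} := by
  ext ω
  simp

theorem IsSimpleMap.comp (hh : IsSimpleMap 𝒜 h) (F : α → β) :
    IsSimpleMap 𝒜 (fun ω => F (h ω)) := by
  classical
  refine ⟨(hh.1.image F).subset (range_subset_iff.2 fun ω => ⟨h ω, ⟨ω, rfl⟩, rfl⟩), fun b => ?_⟩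
  rw [preimage_comp_singleton_eq_biUnion hh.1]
  exact 𝒜.isSetRing.biUnion_mem _ fun a _ => hh.2 a

theorem IsSimple.add (hs : IsSimple 𝒜 s) (ht : IsSimple 𝒜 t) : IsSimple 𝒜 (s + t) :=
  (IsSimpleMap.prodMk hs ht).comp fun p => p.1 + p.2

theorem IsSimple.abs_sub (hs : IsSimple 𝒜 s) (ht : IsSimple 𝒜 t) :
    IsSimple 𝒜 (fun ω => |s ω - t ω|) :=
  (IsSimpleMap.prodMk hs ht).comp fun p => |p.1 - p.2|

theorem IsSimple.const_smul (hs : IsSimple 𝒜 s) (a : ℝ) : IsSimple 𝒜 (a • s) :=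
  IsSimpleMap.comp hs fun x => a * x

theorem isSimple_indicator {A : Set Ω} (hA : A ∈ 𝒜.sets) : IsSimple 𝒜 (A.indicator 1) := by
  classical
  have hmem : IsSimpleMap 𝒜 (· ∈ A) := by
    refine ⟨toFinite _, fun p => ?_⟩
    by_cases hp : p
    · simpa [preimage, hp] using hA
    · simpa [preimage, hp, compl_def] using 𝒜.compl_mem hA
  exact hmem.comp fun p : Prop => if p then (1 : ℝ) else 0

theorem sum_smul_indicator_fiber (hs : (range s).Finite) :
    ∑ r ∈ hs.toFinset, r • (s ⁻¹' {r}).indicator (1 : Ω → ℝ) = s := by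
  ext ω
  rw [Finset.sum_apply, Finset.sum_eq_single (s ω)]
  · simp
  · intro r _ hr
    simp [hr.symm]
  · intro hω
    exact absurd (hs.mem_toFinset.2 ⟨ω, rfl⟩) hω

theorem IsSimple.induction {P : (Ω → ℝ) → Prop}
    (smul_indicator : ∀ (a : ℝ), ∀ A ∈ 𝒜.sets, P (a • A.indicator 1))
    (add : ∀ f g, IsSimple 𝒜 f → IsSimple 𝒜 g → P f → P g → P (f + g))
    (hs : IsSimple 𝒜 s) : P s := by
  have hterm : ∀ (a : ℝ), ∀ A ∈ 𝒜.sets,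
      IsSimple 𝒜 (a • A.indicator 1) ∧ P (a • A.indicator 1) :=
    fun a A hA => ⟨(isSimple_indicator hA).const_smul a, smul_indicator a A hA⟩
  rw [← sum_smul_indicator_fiber hs.1]
  refine (Finset.sum_induction _ (fun f => IsSimple 𝒜 f ∧ P f)
    (fun f g hf hg => ⟨hf.1.add hg.1, add f g hf.1 hg.1 hf.2 hg.2⟩) ?_
    fun r _ => hterm r _ (hs.2 r)).2
  simpa using hterm 0 ∅ 𝒜.empty_mem

theorem simpleIntegral_comp (m : AddContent ℝ 𝒜.sets) (hh : IsSimpleMap 𝒜 h) (F : α → ℝ) :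
    simpleIntegral m (fun ω => F (h ω)) = ∑ a ∈ hh.1.toFinset, F a * m (h ⁻¹' {a}) := by
  classical
  have hsupp : (Function.support fun r : ℝ => r * m ((fun ω => F (h ω)) ⁻¹' {r})) ⊆
      hh.1.toFinset.image F := by
    intro r hr
    by_contra hrange
    have hempty : (fun ω => F (h ω)) ⁻¹' {r} = ∅ :=
      eq_empty_of_forall_notMem fun ω hω => hrange <| by
        simpa using ⟨ω, hω⟩
    exact hr (by simp only [hempty, addContent_empty, mul_zero])
  rw [simpleIntegral, finsum_eq_sum_of_support_subset _ hsupp,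
    ← Finset.sum_fiberwise_of_maps_to fun a => Finset.mem_image_of_mem F]
  refine Finset.sum_congr rfl fun r _ => ?_
  rw [preimage_comp_singleton_eq_biUnion hh.1, addContent_biUnion_eq 𝒜.isSetRing
    (fun a _ => hh.2 a) ((pairwise_disjoint_fiber h).set_pairwise _), Finset.mul_sum]
  exact Finset.sum_congr rfl fun a ha => by rw [(Finset.mem_filter.1 ha).2]

theorem simpleIntegral_eq_sum (m : AddContent ℝ 𝒜.sets) (hs : IsSimple 𝒜 s) :
    simpleIntegral m s = ∑ r ∈ hs.1.toFinset, r * m (s ⁻¹' {r}) :=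
  simpleIntegral_comp m hs id

theorem simpleIntegral_add (m : AddContent ℝ 𝒜.sets) (hs : IsSimple 𝒜 s) (ht : IsSimple 𝒜 t) :
    simpleIntegral m (s + t) = simpleIntegral m s + simpleIntegral m t := by
  have hst := IsSimpleMap.prodMk hs ht
  calc simpleIntegral m (s + t)
      = ∑ p ∈ hst.1.toFinset, (p.1 + p.2) * m ((fun ω => (s ω, t ω)) ⁻¹' {p}) :=
        simpleIntegral_comp m hst fun p => p.1 + p.2
    _ = ∑ p ∈ hst.1.toFinset, p.1 * m ((fun ω => (s ω, t ω)) ⁻¹' {p}) +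
          ∑ p ∈ hst.1.toFinset, p.2 * m ((fun ω => (s ω, t ω)) ⁻¹' {p}) := by
        simp only [add_mul, Finset.sum_add_distrib]
    _ = simpleIntegral m s + simpleIntegral m t :=
        congrArg₂ (· + ·) (simpleIntegral_comp m hst Prod.fst).symm
          (simpleIntegral_comp m hst Prod.snd).symm

theorem simpleIntegral_const_smul (m : AddContent ℝ 𝒜.sets) (hs : IsSimple 𝒜 s) (a : ℝ) :
    simpleIntegral m (a • s) = a * simpleIntegral m s := by
  rw [simpleIntegral_eq_sum m hs, Finset.mul_sum]
  simp only [← mul_assoc]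
  exact simpleIntegral_comp m hs (a * ·)

theorem simpleIntegral_sub (m : AddContent ℝ 𝒜.sets) (hs : IsSimple 𝒜 s) (ht : IsSimple 𝒜 t) :
    simpleIntegral m (s - t) = simpleIntegral m s - simpleIntegral m t := by
  rw [sub_eq_add_neg, ← neg_one_smul ℝ t, simpleIntegral_add m hs (ht.const_smul _),
    simpleIntegral_const_smul m ht, neg_one_mul, sub_eq_add_neg]

theorem simpleIntegral_indicator (m : AddContent ℝ 𝒜.sets) {A : Set Ω} :
    simpleIntegral m (A.indicator 1) = m A := by
  have hone : A.indicator (1 : Ω → ℝ) ⁻¹' {1} = A := by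
    ext ω
    by_cases hω : ω ∈ A <;> simp [hω]
  rw [simpleIntegral, finsum_eq_single _ (1 : ℝ), hone, one_mul]
  intro r hr
  rcases eq_or_ne r 0 with rfl | hr0
  · exact zero_mul _
  · have hempty : A.indicator (1 : Ω → ℝ) ⁻¹' {r} = ∅ := by
      ext ω
      by_cases hω : ω ∈ A <;> simp [hω, hr.symm, hr0.symm]
    rw [hempty, addContent_empty, mul_zero]

theorem simpleIntegral_var_nonneg (mu : BAMeasure 𝒜) (hs : ∀ ω, 0 ≤ s ω) :
    0 ≤ simpleIntegral (var mu) s := by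
  refine finsum_nonneg fun r => ?_
  rcases (s ⁻¹' {r}).eq_empty_or_nonempty with hempty | ⟨ω, rfl⟩
  · rw [hempty, var_empty, mul_zero]
  · exact mul_nonneg (hs ω) (var_nonneg mu _)

theorem abs_simpleIntegral_le (mu : BAMeasure 𝒜) (hs : IsSimple 𝒜 s) :
    |simpleIntegral mu.toFun s| ≤ simpleIntegral (var mu) (fun ω => |s ω|) := by
  calc |simpleIntegral mu.toFun s|
      = |∑ r ∈ hs.1.toFinset, r * mu.toFun (s ⁻¹' {r})| :=
        congrArg _ (simpleIntegral_eq_sum mu.content hs)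
    _ ≤ ∑ r ∈ hs.1.toFinset, |r * mu.toFun (s ⁻¹' {r})| := Finset.abs_sum_le_sum_abs _ _
    _ ≤ ∑ r ∈ hs.1.toFinset, |r| * var mu (s ⁻¹' {r}) := by
        gcongr with r
        rw [abs_mul]
        exact mul_le_mul_of_nonneg_left (abs_le_var mu (hs.2 r)) (abs_nonneg r)
    _ = simpleIntegral (var mu) (fun ω => |s ω|) :=
        (simpleIntegral_comp (varContent mu) hs (|·|)).symm

theorem abs_simpleIntegral_sub_le (mu : BAMeasure 𝒜) (hs : IsSimple 𝒜 s) (ht : IsSimple 𝒜 t) :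
    |simpleIntegral mu.toFun s - simpleIntegral mu.toFun t| ≤
      simpleIntegral (var mu) (fun ω => |s ω - t ω|) :=
  (congrArg _ (simpleIntegral_sub mu.content hs ht).symm).trans_le <|
    abs_simpleIntegral_le mu ((IsSimpleMap.prodMk hs ht).comp fun p => p.1 - p.2)

theorem sum_var_fiber (mu : BAMeasure 𝒜) (hh : IsSimpleMap 𝒜 h) :
    ∑ a ∈ hh.1.toFinset, var mu (h ⁻¹' {a}) = var mu univ := by
  have hcover : ⋃ a ∈ hh.1.toFinset, h ⁻¹' {a} = univ := by
    ext ω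
    simp
  rw [← hcover]
  exact (addContent_biUnion_eq (m := varContent mu) 𝒜.isSetRing (fun a _ => hh.2 a)
    ((pairwise_disjoint_fiber h).set_pairwise _)).symm

theorem simpleIntegral_var_le_of_ae_le {mu : BAMeasure 𝒜} (hs : IsSimple 𝒜 s) {c : ℝ}
    (hsc : ∀ᶠ ω in ae mu, s ω ≤ c) : simpleIntegral (var mu) s ≤ c * var mu univ := by
  calc simpleIntegral (var mu) s = ∑ r ∈ hs.1.toFinset, r * var mu (s ⁻¹' {r}) :=
        simpleIntegral_eq_sum (varContent mu) hs
    _ ≤ ∑ r ∈ hs.1.toFinset, c * var mu (s ⁻¹' {r}) := by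
        refine Finset.sum_le_sum fun r _ => ?_
        rcases le_or_gt r c with hrc | hcr
        · exact mul_le_mul_of_nonneg_right hrc (var_nonneg mu _)
        · have hsub : s ⁻¹' {r} ⊆ {ω | ¬s ω ≤ c} := by
            rintro ω rfl
            exact not_le.2 hcr
          have hnull : var mu (s ⁻¹' {r}) = 0 := by
            rw [← outer_eq_var mu (hs.2 r)]
            exact ((outer_mono mu hsub).trans_eq hsc).antisymm (outer_nonneg mu _)
          rw [hnull, mul_zero, mul_zero]
    _ = c * var mu univ := by rw [← Finset.mul_sum, sum_var_fiber mu hs]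

end Simple

/-! ### The space `L⁰` -/

section L0

variable {lam mu : BAMeasure 𝒜} {f g : Ω → ℝ} {s : ℕ → Ω → ℝ}

theorem IsSimple.mem_L0 {s : Ω → ℝ} (hs : IsSimple 𝒜 s) (lam : BAMeasure 𝒜) : s ∈ L0 lam := by
  refine ⟨fun _ => s, fun _ => hs, fun c hc => ?_⟩
  simp [hc.not_gt, outer_empty]

theorem zero_mem_L0 (lam : BAMeasure 𝒜) : (0 : Ω → ℝ) ∈ L0 lam := by
  simpa only [indicator_empty'] using (isSimple_indicator 𝒜.empty_mem).mem_L0 lam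

theorem LinearOnL0.map_zero {φ : (Ω → ℝ) → ℝ} (hφ : LinearOnL0 lam φ) : φ 0 = 0 := by
  simpa only [zero_smul, zero_mul] using hφ.2 0 0 (zero_mem_L0 lam)

theorem dL0_le (lam : BAMeasure 𝒜) (f g : Ω → ℝ) {c : ℝ} (hc : 0 < c) :
    dL0 lam f g ≤ c + outer lam {ω | c ≤ |f ω - g ω|} := by
  refine csInf_le ⟨0, ?_⟩ ⟨c, hc, rfl⟩
  rintro _ ⟨b, hb, rfl⟩
  exact add_nonneg hb.le (outer_nonneg _ _)

theorem dL0_nonneg (lam : BAMeasure 𝒜) (f g : Ω → ℝ) : 0 ≤ dL0 lam f g := by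
  refine Real.sInf_nonneg ?_
  rintro _ ⟨b, hb, rfl⟩
  exact add_nonneg hb.le (outer_nonneg _ _)

theorem exists_outer_lt_of_dL0_lt {x : ℝ} (h : dL0 lam f g < x) :
    ∃ c > 0, c < x ∧ outer lam {ω | c ≤ |f ω - g ω|} < x := by
  obtain ⟨_, ⟨c, hc, rfl⟩, hlt⟩ := exists_lt_of_csInf_lt (by exact ⟨_, 1, one_pos, rfl⟩) h
  exact ⟨c, hc, by linarith [outer_nonneg lam {ω | c ≤ |f ω - g ω|}], by linarith⟩

theorem dL0_le_var_of_eqOn_compl (lam : BAMeasure 𝒜) {A : Set Ω} (hA : A ∈ 𝒜.sets)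
    (hfg : EqOn f g Aᶜ) : dL0 lam f g ≤ var lam A := by
  refine le_of_forall_pos_le_add fun c hc => (dL0_le lam f g hc).trans ?_
  have hsub : {ω | c ≤ |f ω - g ω|} ⊆ A := fun ω hω => by
    by_contra hωA
    rw [mem_ofPred_eq, hfg hωA, sub_self, abs_zero] at hω
    exact hω.not_gt hc
  linarith [outer_le_var lam hA hsub]

theorem LConv.tendsto_dL0 (h : LConv lam s f) : Tendsto (fun n => dL0 lam (s n) f) atTop (𝓝 0) := by
  refine tendsto_order.2 ⟨fun x hx => .of_forall fun n => hx.trans_le (dL0_nonneg _ _ _),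
    fun ε hε => ?_⟩
  filter_upwards [(h (ε / 4) (by positivity)).eventually_lt_const (half_pos hε)] with n hn
  have hsub : {ω | ε / 2 ≤ |s n ω - f ω|} ⊆ {ω | ε / 4 < |s n ω - f ω|} :=
    fun ω hω => lt_of_lt_of_le (by linarith : ε / 4 < ε / 2) hω
  linarith [dL0_le lam (s n) f (half_pos hε), outer_mono lam hsub]

theorem ContinuousOnL0.tendsto {φ : (Ω → ℝ) → ℝ} (hφ : ContinuousOnL0 lam φ) (hf : f ∈ L0 lam)
    (hs : ∀ n, s n ∈ L0 lam) (hsf : LConv lam s f) :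
    Tendsto (fun n => φ (s n)) atTop (𝓝 (φ f)) := by
  refine Metric.tendsto_nhds.2 fun ε hε => ?_
  obtain ⟨δ, hδ, hφδ⟩ := hφ f hf ε hε
  filter_upwards [hsf.tendsto_dL0.eventually_lt_const hδ] with n hn
  exact hφδ _ (hs n) hn

theorem ContinuousOnL0.eqOn_of_eq_simple {φ ψ : (Ω → ℝ) → ℝ} (hφ : ContinuousOnL0 lam φ)
    (hψ : ContinuousOnL0 lam ψ) (h : ∀ s, IsSimple 𝒜 s → φ s = ψ s) : EqOn φ ψ (L0 lam) := by
  rintro f ⟨s, hs, hsf⟩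
  have hsL0 : ∀ n, s n ∈ L0 lam := fun n => (hs n).mem_L0 lam
  refine tendsto_nhds_unique (hφ.tendsto ⟨s, hs, hsf⟩ hsL0 hsf) ?_
  simpa only [h _ (hs _)] using hψ.tendsto ⟨s, hs, hsf⟩ hsL0 hsf

theorem AbsCont.exists_outer_lt (h : AbsCont mu lam) {ε : ℝ} (hε : 0 < ε) :
    ∃ δ > 0, ∀ B, outer lam B < δ → outer mu B < ε := by
  obtain ⟨δ, hδ, hac⟩ := h ε hε
  refine ⟨δ, hδ, fun B hB => ?_⟩
  obtain ⟨A, hA, hBA, hlt⟩ := exists_var_lt_of_outer_lt hB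
  exact (outer_le_var mu hA hBA).trans_lt (hac A hA hlt)

theorem LConv.of_absCont (hsf : LConv lam s f) (h : AbsCont mu lam) : LConv mu s f := by
  refine fun c hc => tendsto_order.2
    ⟨fun x hx => .of_forall fun n => hx.trans_le (outer_nonneg _ _), fun ε hε => ?_⟩
  obtain ⟨δ, hδ, hac⟩ := h.exists_outer_lt hε
  filter_upwards [(hsf c hc).eventually_lt_const hδ] with n hn
  exact hac _ hn

theorem AbsCont.L0_subset (h : AbsCont mu lam) : L0 lam ⊆ L0 mu :=
  fun _ ⟨s, hs, hsf⟩ => ⟨s, hs, hsf.of_absCont h⟩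

theorem LinearOnL0.of_absCont {φ : (Ω → ℝ) → ℝ} (hφ : LinearOnL0 mu φ) (h : AbsCont mu lam) :
    LinearOnL0 lam φ :=
  ⟨fun f hf g hg => hφ.1 f (h.L0_subset hf) g (h.L0_subset hg),
    fun a f hf => hφ.2 a f (h.L0_subset hf)⟩

theorem ContinuousOnL0.of_absCont {φ : (Ω → ℝ) → ℝ} (hφ : ContinuousOnL0 mu φ)
    (h : AbsCont mu lam) : ContinuousOnL0 lam φ := by
  intro f hf ε hε
  obtain ⟨δ, hδ, hφδ⟩ := hφ f (h.L0_subset hf) ε hε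
  obtain ⟨η, hη, hac⟩ := h.exists_outer_lt (half_pos hδ)
  refine ⟨min η (δ / 2), by positivity, fun g hg hlt => hφδ g (h.L0_subset hg) ?_⟩
  obtain ⟨c, hc, hcδ, hout⟩ := exists_outer_lt_of_dL0_lt hlt
  linarith [dL0_le mu g f hc, hac _ (hout.trans_le (min_le_left _ _)), min_le_right η (δ / 2)]

end L0

/-! ### Integration with respect to a set function of finite range -/

section Integral

variable {mu : BAMeasure 𝒜} {f g : Ω → ℝ} {ι : Type*} {l : Filter ι} {s t : ι → Ω → ℝ}

theorem FiniteRange.neg (hmu : FiniteRange mu) : FiniteRange (-mu) := by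
  have himage := hmu.image Neg.neg
  rwa [image_image] at himage

theorem FiniteRange.posPart_mem (hmu : FiniteRange mu) (A : Set Ω) :
    posPart mu A ∈ mu.toFun '' 𝒜.sets := by
  have hsub : {x | ∃ B ∈ 𝒜.sets, B ⊆ A ∧ x = mu.toFun B} ⊆ mu.toFun '' 𝒜.sets := by
    rintro _ ⟨B, hB, -, rfl⟩
    exact ⟨B, hB, rfl⟩
  exact hsub (Nonempty.csSup_mem ⟨_, ∅, 𝒜.empty_mem, empty_subset _, rfl⟩ (hmu.subset hsub))

theorem FiniteRange.finite_range_var (hmu : FiniteRange mu) : (range (var mu)).Finite :=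
  (hmu.image2 (· + ·) hmu.neg).subset <| range_subset_iff.2 fun A =>
    ⟨_, hmu.posPart_mem A, _, hmu.neg.posPart_mem A, rfl⟩

theorem FiniteRange.exists_outer_eq_zero_of_lt (hmu : FiniteRange mu) :
    ∃ δ > 0, ∀ B, outer mu B < δ → outer mu B = 0 := by
  have hgap : ∀ᶠ δ in 𝓝[>] (0 : ℝ), ∀ x ∈ range (var mu), x < δ → x ≤ 0 := by
    refine (eventually_all_finite hmu.finite_range_var).2 fun x _ => ?_
    rcases le_or_gt x 0 with hx | hx
    · exact .of_forall fun _ _ => hx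
    · filter_upwards [nhdsWithin_le_nhds (Iio_mem_nhds hx)] with δ hδ hlt
      exact absurd hlt (not_lt.2 (le_of_lt hδ))
  obtain ⟨δ, hgapδ, hδ⟩ := (hgap.and self_mem_nhdsWithin).exists
  refine ⟨δ, hδ, fun B hB => ?_⟩
  obtain ⟨A, hA, hBA, hlt⟩ := exists_var_lt_of_outer_lt hB
  exact ((outer_le_var mu hA hBA).trans (hgapδ _ ⟨A, rfl⟩ hlt)).antisymm (outer_nonneg mu B)

/-- Convergence of `s` to `f` along `l` in the essential supremum seminorm of `μ`. For `μ` of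
finite range it is the same as convergence in `μ`-measure. -/
def TendstoEssUniformly (mu : BAMeasure 𝒜) (s : ι → Ω → ℝ) (f : Ω → ℝ) (l : Filter ι) : Prop :=
  ∀ c > 0, ∀ᶠ i in l, ∀ᶠ ω in ae mu, |s i ω - f ω| ≤ c

theorem LConv.tendstoEssUniformly {s : ℕ → Ω → ℝ} (hsf : LConv mu s f) (hmu : FiniteRange mu) :
    TendstoEssUniformly mu s f atTop := by
  obtain ⟨δ, hδ, hgap⟩ := hmu.exists_outer_eq_zero_of_lt
  intro c hc
  filter_upwards [(hsf c hc).eventually_lt_const hδ] with n hn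
  exact eventually_ae_abs_le_iff.2 (hgap _ hn)

namespace TendstoEssUniformly

theorem add (hs : TendstoEssUniformly mu s f l) (ht : TendstoEssUniformly mu t g l) :
    TendstoEssUniformly mu (fun i => s i + t i) (f + g) l := by
  intro c hc
  filter_upwards [hs _ (half_pos hc), ht _ (half_pos hc)] with i hsi hti
  filter_upwards [hsi, hti] with ω hsω htω
  simp only [Pi.add_apply, add_sub_add_comm]
  linarith [abs_add_le (s i ω - f ω) (t i ω - g ω)]

theorem const_smul (hs : TendstoEssUniformly mu s f l) (a : ℝ) :
    TendstoEssUniformly mu (fun i => a • s i) (a • f) l := by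
  intro c hc
  obtain ⟨b, hb, hab⟩ := exists_pos_mul_lt hc |a|
  filter_upwards [hs b hb] with i hsi
  filter_upwards [hsi] with ω hsω
  simp only [Pi.smul_apply, smul_eq_mul, ← mul_sub, abs_mul]
  exact (mul_le_mul_of_nonneg_left hsω (abs_nonneg a)).trans hab.le

theorem comp {κ : Type*} {k : Filter κ} {u : κ → ι} (hs : TendstoEssUniformly mu s f l)
    (hu : Tendsto u k l) : TendstoEssUniformly mu (fun j => s (u j)) f k :=
  fun c hc => hu.eventually (hs c hc)

theorem tendsto_simpleIntegral_abs_sub (hs : ∀ i, IsSimple 𝒜 (s i)) (ht : ∀ i, IsSimple 𝒜 (t i))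
    (hsf : TendstoEssUniformly mu s f l) (htf : TendstoEssUniformly mu t f l) :
    Tendsto (fun i => simpleIntegral (var mu) fun ω => |s i ω - t i ω|) l (𝓝 0) := by
  refine tendsto_order.2 ⟨fun x hx => .of_forall fun i =>
    hx.trans_le (simpleIntegral_var_nonneg mu fun _ => abs_nonneg _), fun ε hε => ?_⟩
  obtain ⟨c, hc, hcε⟩ := exists_pos_mul_lt hε (var mu univ)
  filter_upwards [hsf _ (half_pos hc), htf _ (half_pos hc)] with i hsi hti
  refine (simpleIntegral_var_le_of_ae_le ((hs i).abs_sub (ht i)) (c := c) ?_).trans_lt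
    (by rwa [mul_comm])
  filter_upwards [hsi, hti] with ω hsω htω
  rw [abs_sub_comm] at htω
  linarith [abs_sub_le (s i ω) (f ω) (t i ω)]

theorem tendsto_dist_simpleIntegral (hs : ∀ i, IsSimple 𝒜 (s i)) (ht : ∀ i, IsSimple 𝒜 (t i))
    (hsf : TendstoEssUniformly mu s f l) (htf : TendstoEssUniformly mu t f l) :
    Tendsto (fun i => dist (simpleIntegral mu.toFun (s i)) (simpleIntegral mu.toFun (t i)))
      l (𝓝 0) :=
  squeeze_zero (fun _ => dist_nonneg) (fun i => abs_simpleIntegral_sub_le mu (hs i) (ht i))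
    (tendsto_simpleIntegral_abs_sub hs ht hsf htf)

variable {s t : ℕ → Ω → ℝ}

theorem lConv (hsf : TendstoEssUniformly mu s f atTop) : LConv mu s f := by
  intro c hc
  refine tendsto_const_nhds.congr' ?_
  filter_upwards [hsf c hc] with n hn
  exact (eventually_ae_abs_le_iff.1 hn).symm

theorem memL1 (hs : ∀ n, IsSimple 𝒜 (s n)) (hsf : TendstoEssUniformly mu s f atTop) :
    MemL1 mu f := by
  refine ⟨s, hs, hsf.lConv, fun ε hε => ?_⟩
  have hmean := tendsto_simpleIntegral_abs_sub (l := atTop ×ˢ atTop) (fun p => hs p.1)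
    (fun p => hs p.2) (hsf.comp tendsto_fst) (hsf.comp tendsto_snd)
  rw [prod_atTop_atTop_eq] at hmean
  obtain ⟨⟨M, N⟩, hMN⟩ := eventually_atTop.1 (hmean.eventually_lt_const hε)
  exact ⟨max M N, fun m hm n hn => hMN (m, n) ⟨le_of_max_le_left hm, le_of_max_le_right hn⟩⟩

theorem cauchySeq_simpleIntegral (hs : ∀ n, IsSimple 𝒜 (s n))
    (hsf : TendstoEssUniformly mu s f atTop) :
    CauchySeq fun n => simpleIntegral mu.toFun (s n) := by
  rw [cauchySeq_iff_tendsto_dist_atTop_0, ← prod_atTop_atTop_eq]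
  exact tendsto_dist_simpleIntegral (fun p => hs p.1) (fun p => hs p.2) (hsf.comp tendsto_fst)
    (hsf.comp tendsto_snd)

theorem tendsto_integral (hmu : FiniteRange mu) (hs : ∀ n, IsSimple 𝒜 (s n))
    (hsf : TendstoEssUniformly mu s f atTop) :
    Tendsto (fun n => simpleIntegral mu.toFun (s n)) atTop (𝓝 (integral mu f)) := by
  have hf := memL1 hs hsf
  obtain ⟨hr, hrconv, -⟩ := hf.choose_spec
  have hrf := hrconv.tendstoEssUniformly hmu
  rw [integral, dif_pos hf]
  exact (cauchySeq_simpleIntegral hr hrf).tendsto_limUnder.congr_dist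
    (tendsto_dist_simpleIntegral hr hs hrf hsf)

end TendstoEssUniformly

theorem FiniteRange.exists_tendstoEssUniformly (hmu : FiniteRange mu) (hf : f ∈ L0 mu) :
    ∃ s : ℕ → Ω → ℝ, (∀ n, IsSimple 𝒜 (s n)) ∧ TendstoEssUniformly mu s f atTop := by
  obtain ⟨s, hs, hsf⟩ := hf
  exact ⟨s, hs, hsf.tendstoEssUniformly hmu⟩

theorem FiniteRange.memL1 (hmu : FiniteRange mu) (hf : f ∈ L0 mu) : MemL1 mu f := by
  obtain ⟨s, hs, hsf⟩ := hmu.exists_tendstoEssUniformly hf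
  exact hsf.memL1 hs

theorem FiniteRange.integral_eq_simpleIntegral (hmu : FiniteRange mu) {s : Ω → ℝ}
    (hs : IsSimple 𝒜 s) : integral mu s = simpleIntegral mu.toFun s := by
  have hconst : TendstoEssUniformly mu (fun _ : ℕ => s) s atTop :=
    fun c hc => .of_forall fun _ => .of_forall fun ω => by simpa using hc.le
  exact tendsto_nhds_unique (hconst.tendsto_integral hmu fun _ => hs) tendsto_const_nhds

theorem FiniteRange.integral_indicator (hmu : FiniteRange mu) {A : Set Ω} (hA : A ∈ 𝒜.sets) :
    integral mu (A.indicator 1) = mu.toFun A :=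
  (hmu.integral_eq_simpleIntegral (isSimple_indicator hA)).trans
    (simpleIntegral_indicator mu.content)

theorem FiniteRange.linearOnL0_integral (hmu : FiniteRange mu) :
    LinearOnL0 mu (integral mu) := by
  refine ⟨fun f hf g hg => ?_, fun a f hf => ?_⟩
  all_goals obtain ⟨s, hs, hsf⟩ := hmu.exists_tendstoEssUniformly hf
  · obtain ⟨t, ht, htg⟩ := hmu.exists_tendstoEssUniformly hg
    refine tendsto_nhds_unique
      ((hsf.add htg).tendsto_integral hmu fun n => (hs n).add (ht n)) ?_
    exact ((hsf.tendsto_integral hmu hs).add (htg.tendsto_integral hmu ht)).congr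
      fun n => (simpleIntegral_add mu.content (hs n) (ht n)).symm
  · refine tendsto_nhds_unique
      ((hsf.const_smul a).tendsto_integral hmu fun n => (hs n).const_smul a) ?_
    exact ((hsf.tendsto_integral hmu hs).const_mul a).congr
      fun n => (simpleIntegral_const_smul mu.content (hs n) a).symm

theorem FiniteRange.abs_integral_sub_le (hmu : FiniteRange mu) (hf : f ∈ L0 mu) (hg : g ∈ L0 mu)
    {c : ℝ} (hfg : ∀ᶠ ω in ae mu, |f ω - g ω| ≤ c) :
    |integral mu f - integral mu g| ≤ c * var mu univ := by
  obtain ⟨s, hs, hsf⟩ := hmu.exists_tendstoEssUniformly hf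
  obtain ⟨t, ht, htg⟩ := hmu.exists_tendstoEssUniformly hg
  have hbound : ∀ d ∈ Ioi c, |integral mu f - integral mu g| ≤ d * var mu univ := by
    intro d hd
    have hhalf : 0 < (d - c) / 2 := half_pos (sub_pos.2 hd)
    refine le_of_tendsto
      ((hsf.tendsto_integral hmu hs).sub (htg.tendsto_integral hmu ht)).abs ?_
    filter_upwards [hsf _ hhalf, htg _ hhalf] with n hsn htn
    refine (abs_simpleIntegral_sub_le mu (hs n) (ht n)).trans
      (simpleIntegral_var_le_of_ae_le ((hs n).abs_sub (ht n)) ?_)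
    filter_upwards [hsn, htn, hfg] with ω hsω htω hω
    rw [abs_sub_comm] at htω
    linarith [abs_sub_le (s n ω) (f ω) (t n ω), abs_sub_le (f ω) (g ω) (t n ω)]
  exact ge_of_tendsto (((continuous_mul_const _).tendsto c).mono_left nhdsWithin_le_nhds)
    (eventually_mem_nhdsWithin.mono (f := 𝓝[>] c) hbound)

theorem FiniteRange.continuousOnL0_integral (hmu : FiniteRange mu) :
    ContinuousOnL0 mu (integral mu) := by
  intro f hf ε hε
  obtain ⟨δ, hδ, hgap⟩ := hmu.exists_outer_eq_zero_of_lt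
  obtain ⟨η, hη, hηε⟩ := exists_pos_mul_lt hε (var mu univ)
  refine ⟨min δ η, lt_min hδ hη, fun g hg hlt => ?_⟩
  obtain ⟨c, -, hcη, hout⟩ := exists_outer_lt_of_dL0_lt hlt
  have hnull := hgap _ (hout.trans_le (min_le_left _ _))
  have hgf : ∀ᶠ ω in ae mu, |g ω - f ω| ≤ η := by
    have hlt_c : ∀ᶠ ω in ae mu, |g ω - f ω| < c := by
      simpa only [eventually_ae_iff, not_lt] using hnull
    filter_upwards [hlt_c] with ω hω
    exact (hω.trans (hcη.trans_le (min_le_right _ _))).le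
  rw [mul_comm] at hηε
  exact (hmu.abs_integral_sub_le hg hf hgf).trans_lt hηε

end Integral

/-! ### Representation of continuous linear functionals -/

section Representation

variable {lam mu : BAMeasure 𝒜} {φ : (Ω → ℝ) → ℝ}

/-- The set function `A ↦ φ(1_A)` induced by a linear functional `φ` on `L⁰(λ)`. -/
noncomputable def LinearOnL0.content (hφ : LinearOnL0 lam φ) : AddContent ℝ 𝒜.sets :=
  𝒜.isSetRing.addContent_of_union (fun A => φ (A.indicator 1))
    ((congrArg φ (indicator_empty' _)).trans hφ.map_zero)
    (fun hA hB hAB => by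
      rw [indicator_union_of_disjoint hAB]
      exact hφ.1 _ ((isSimple_indicator hA).mem_L0 lam) _ ((isSimple_indicator hB).mem_L0 lam))

theorem exists_apply_indicator_eq_zero_of_var_lt (hφ : LinearOnL0 lam φ)
    (hcont : ContinuousOnL0 lam φ) :
    ∃ δ > 0, ∀ A ∈ 𝒜.sets, var lam A < δ → φ (A.indicator 1) = 0 := by
  obtain ⟨δ, hδ, hφδ⟩ := hcont 0 (zero_mem_L0 lam) 1 one_pos
  refine ⟨δ, hδ, fun A hA hlt => ?_⟩
  have hA' := isSimple_indicator hA
  have hline : ∀ a : ℝ, |a * φ (A.indicator 1)| < 1 := by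
    intro a
    have hoff : EqOn (a • A.indicator 1) (0 : Ω → ℝ) Aᶜ := fun ω hω => by
      simp [indicator_of_notMem hω]
    have hclose := hφδ _ ((hA'.const_smul a).mem_L0 lam)
      ((dL0_le_var_of_eqOn_compl lam hA hoff).trans_lt hlt)
    rwa [hφ.2 a _ (hA'.mem_L0 lam), hφ.map_zero, sub_zero] at hclose
  by_contra hne
  simpa [inv_mul_cancel₀ hne] using hline (φ (A.indicator 1))⁻¹

theorem absCont_of_eq_zero_of_var_lt {δ : ℝ} (hδ : 0 < δ)
    (h : ∀ A ∈ 𝒜.sets, var lam A < δ → mu.toFun A = 0) : AbsCont mu lam := by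
  refine fun ε hε => ⟨δ, hδ, fun A hA hlt => ?_⟩
  rwa [var_eq_zero_of_forall_subset fun B hB hBA =>
    h B hB ((var_mono lam hB hA hBA).trans_lt hlt)]

theorem exists_ba0rel_apply_indicator_eq (hφ : LinearOnL0 lam φ) (hcont : ContinuousOnL0 lam φ) :
    ∃ mu : BAMeasure 𝒜, BA0rel lam mu ∧ ∀ A, φ (A.indicator 1) = mu.toFun A := by
  obtain ⟨δ, hδ, hgap⟩ := exists_apply_indicator_eq_zero_of_var_lt hφ hcont
  have hfin : (hφ.content '' 𝒜.sets).Finite := by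
    simpa only [powerset_univ, inter_univ] using
      finite_image_of_eq_zero_of_lt 𝒜.isSetRing (varContent lam) (fun A _ => var_nonneg lam A)
        hφ.content hδ hgap 𝒜.isSetAlgebra.univ_mem
  exact ⟨.ofFinite hφ.content hfin, ⟨hfin, absCont_of_eq_zero_of_var_lt hδ hgap⟩, fun _ => rfl⟩

theorem LinearOnL0.eq_simpleIntegral (hφ : LinearOnL0 lam φ)
    (h : ∀ A ∈ 𝒜.sets, φ (A.indicator 1) = mu.toFun A) {s : Ω → ℝ} (hs : IsSimple 𝒜 s) :
    φ s = simpleIntegral mu.toFun s := by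
  refine IsSimple.induction (P := fun s => φ s = simpleIntegral mu.toFun s)
    (fun a A hA => ?_) (fun f g hf hg ihf ihg => ?_) hs
  · have hA' := isSimple_indicator hA
    rw [hφ.2 a _ (hA'.mem_L0 lam), h A hA]
    exact ((simpleIntegral_const_smul mu.content hA' a).trans
      (congrArg (a * ·) (simpleIntegral_indicator mu.content))).symm
  · rw [hφ.1 f (hf.mem_L0 lam) g (hg.mem_L0 lam), ihf, ihg]
    exact (simpleIntegral_add mu.content hf hg).symm

theorem exists_ba0rel_eqOn_integral (hφ : LinearOnL0 lam φ) (hcont : ContinuousOnL0 lam φ) :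
    ∃ mu : BAMeasure 𝒜, BA0rel lam mu ∧ EqOn φ (integral mu) (L0 lam) := by
  obtain ⟨mu, hmu, hind⟩ := exists_ba0rel_apply_indicator_eq hφ hcont
  refine ⟨mu, hmu, hcont.eqOn_of_eq_simple (hmu.1.continuousOnL0_integral.of_absCont hmu.2) ?_⟩
  intro s hs
  rw [hφ.eq_simpleIntegral (fun A _ => hind A) hs, hmu.1.integral_eq_simpleIntegral hs]

end Representation

end

/-- Theorem 2 (Riesz representation): `μ ↦ (f ↦ ∫ f dμ)` is a linear isomorphism from
`ba₀(λ)` onto the continuous linear functionals on `L⁰(λ)`: every `f ∈ L⁰(λ)` is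
`μ`-integrable for every `μ ∈ ba₀(λ)`, the functional `f ↦ ∫ f dμ` is linear and continuous
on `L⁰(λ)`, and every continuous linear functional on `L⁰(λ)` is represented by a unique
`μ ∈ ba₀(λ)`. -/
theorem stmt_1 {Ω : Type*} {𝒜 : SetAlg Ω} (lam : BAMeasure 𝒜) :
    (∀ mu : BAMeasure 𝒜, BA0rel lam mu → ∀ f ∈ L0 lam, MemL1 mu f) ∧
    (∀ mu : BAMeasure 𝒜, BA0rel lam mu →
      LinearOnL0 lam (fun f => integral mu f) ∧
      ContinuousOnL0 lam (fun f => integral mu f)) ∧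
    (∀ φ : (Ω → ℝ) → ℝ, LinearOnL0 lam φ → ContinuousOnL0 lam φ →
      ∃ mu : BAMeasure 𝒜, BA0rel lam mu ∧ (∀ f ∈ L0 lam, φ f = integral mu f) ∧
        ∀ nu : BAMeasure 𝒜, BA0rel lam nu → (∀ f ∈ L0 lam, φ f = integral nu f) →
          ∀ A ∈ 𝒜.sets, nu.toFun A = mu.toFun A) := by
  refine ⟨fun mu hmu f hf => hmu.1.memL1 (hmu.2.L0_subset hf),
    fun mu hmu => ⟨hmu.1.linearOnL0_integral.of_absCont hmu.2,
      hmu.1.continuousOnL0_integral.of_absCont hmu.2⟩,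
    fun φ hφ hcont => ?_⟩
  obtain ⟨mu, hmu, hrep⟩ := exists_ba0rel_eqOn_integral hφ hcont
  refine ⟨mu, hmu, hrep, fun nu hnu hrep_nu A hA => ?_⟩
  have hA' : A.indicator 1 ∈ L0 lam := (isSimple_indicator hA).mem_L0 lam
  calc nu.toFun A = integral nu (A.indicator 1) := (hnu.1.integral_indicator hA).symm
    _ = φ (A.indicator 1) := (hrep_nu _ hA').symm
    _ = integral mu (A.indicator 1) := hrep hA'
    _ = mu.toFun A := hmu.1.integral_indicator hA

end FA
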